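/- Let R be a one-dimensional Cohen-Macaulay local ring, I an m-primary ideal, and M a nonzero finitely generated torsion-free R-module. If M is I-Ulrich, then M has minimal multiplicity with respect to I. -/

import Mathlib

/-!
Choose `x ∈ I` superficial for `M`: since the residue field is infinite, there is an `x` whose form of
degree one avoids all associated primes of the associated graded module (over the Rees algebra) that
do not contain the irrelevant ideal, and then `x` is injective on that graded module in large degrees
(`exists_superficial`). The pieces `I ^ n M / I ^ (n + 1) M` eventually all have the same finite
length `e = e(I, M)`, so multiplication by `x` between them is bijective, and Nakayama's lemma gives
`x I ^ n M = I ^ (n + 1) M`; torsion-freeness makes `x` injective on `M` (`exists_reduction`).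

Injectivity gives `ℓ(M / xQ) = ℓ(M / Q) + ℓ(M / xM)` for every submodule `Q` (`length_quotient_map`).
With `Q = I ^ n M` for large `n` this yields `ℓ(M / xM) = e`. If `M` is `I`-Ulrich, then
`ℓ(M / xM) = ℓ(M / IM)`, whence `IM = xM` and `I ^ 2 M = x I M`; taking `Q = IM` gives
`ℓ(M / I ^ 2 M) = ℓ(M / IM) + e`, that is, `ℓ(IM / I ^ 2 M) = e`.
-/

open IsLocalRing Filter

section Defs

variable (R : Type*) [CommRing R]

/-- The length of an `R`-module `M`: the Krull dimension of its lattice of submodules. -/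
noncomputable def mlen (M : Type*) [AddCommGroup M] [Module R M] : WithBot ℕ∞ :=
  Order.krullDim (Submodule R M)

/-- The minimal number of generators of an `R`-module. -/
noncomputable def mu (M : Type*) [AddCommGroup M] [Module R M] : ℕ :=
  sInf {n | ∃ s : Finset M, s.card = n ∧ Submodule.span R (s : Set M) = ⊤}

/-- The Hilbert–Samuel multiplicity `e_R(I, M)` of a finitely generated module over a
one-dimensional local ring with respect to an `m`-primary ideal `I`: the eventual value of
`ℓ(M/I^{n+1}M) - ℓ(M/I^n M)`. -/
noncomputable def hsMult (I : Ideal R) (M : Type*) [AddCommGroup M] [Module R M] : ℕ∞ := by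
  classical
  exact if h : ∃ e : ℕ∞, ∀ᶠ n in atTop,
      mlen R (M ⧸ (I ^ (n + 1) • (⊤ : Submodule R M))) =
        mlen R (M ⧸ (I ^ n • (⊤ : Submodule R M))) + (e : WithBot ℕ∞)
    then h.choose else 0

/-- The length of the subquotient `P/Q` for submodules `Q ⊆ P` of `M`. -/
noncomputable def qlen {M : Type*} [AddCommGroup M] [Module R M]
    (P Q : Submodule R M) : WithBot ℕ∞ :=
  mlen R (↥P ⧸ Q.comap P.subtype)

/-- `(x)` is a minimal reduction of `I` (one-dimensional situation): a principal subideal with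
`I^{n+1} = x I^n` for all large `n`. -/
def IsMinimalReduction (I : Ideal R) (x : R) : Prop :=
  x ∈ I ∧ ∃ N : ℕ, ∀ n ≥ N, I ^ (n + 1) = Ideal.span {x} * I ^ n

/-- A module is torsion-free if non zero-divisors of `R` act injectively. -/
def TorsionFree (M : Type*) [AddCommGroup M] [Module R M] : Prop :=
  ∀ r ∈ nonZeroDivisors R, ∀ m : M, r • m = 0 → m = 0

/-- The embedding dimension of a local ring: the minimal number of generators of the
maximal ideal. -/
noncomputable def embdim (R : Type*) [CommRing R] [IsLocalRing R] : ℕ :=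
  sInf {n | ∃ s : Finset R, s.card = n ∧ Ideal.span (s : Set R) = maximalIdeal R}

/-- A Noetherian local ring is regular iff its embedding dimension equals its Krull
dimension. -/
def IsRegularLocal (R : Type*) [CommRing R] [IsLocalRing R] : Prop :=
  ((embdim R : ℕ∞) : WithBot ℕ∞) = ringKrullDim R

/-- The colon `(J :_Q K)` of two `R`-submodules of an `R`-algebra `Q`. -/
def colonQ {Q : Type*} [CommRing Q] [Algebra R Q] (J K : Submodule R Q) : Submodule R Q where
  carrier := {q | ∀ k ∈ K, q * k ∈ J}
  add_mem' := by
    intro a b ha hb k hk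
    simpa [add_mul] using J.add_mem (ha k hk) (hb k hk)
  zero_mem' := by intro k hk; rw [zero_mul]; exact J.zero_mem
  smul_mem' := by
    intro c a ha k hk
    simpa [smul_mul_assoc] using J.smul_mem c (ha k hk)

end Defs

/-! ### Prime avoidance and associated primes -/

/-- A module over a local ring with infinite residue field is not a finite union of proper
submodules: by B. H. Neumann's covering lemma one of them would have a finite nonzero quotient, and
the annihilator `J` of a nonzero element of that quotient would make `R ⧸ J`, hence the residue
field, finite. -/
theorem exists_notMem_of_ne_top {R : Type*} [CommRing R] [IsLocalRing R]
    [Infinite (ResidueField R)] {N : Type*} [AddCommGroup N] [Module R N]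
    (S : Set (Submodule R N)) (hS : S.Finite) (htop : ∀ P ∈ S, P ≠ ⊤) :
    ∃ x : N, ∀ P ∈ S, x ∉ P := by
  by_contra! hcon
  have hcov : ⋃ P ∈ hS.toFinset, (((fun Q : Submodule R N => Q) P : Submodule R N) : Set N) =
      Set.univ := by
    refine Set.eq_univ_of_forall fun x => ?_
    obtain ⟨P, hP, hx⟩ := hcon x
    exact Set.mem_biUnion (hS.mem_toFinset.2 hP) hx
  obtain ⟨P, hP, hfi⟩ := Submodule.exists_finiteIndex_of_cover hcov
  have hfin : Finite (N ⧸ P) := AddSubgroup.finite_quotient_of_finiteIndex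
  have hnt : Nontrivial (N ⧸ P) :=
    Submodule.Quotient.nontrivial_iff.mpr (htop P (hS.mem_toFinset.1 hP))
  obtain ⟨e, he⟩ := exists_ne (0 : N ⧸ P)
  let J : Ideal R := LinearMap.ker (LinearMap.toSpanSingleton R (N ⧸ P) e)
  have hJ : J ≤ maximalIdeal R := by
    refine le_maximalIdeal fun h => he ?_
    have h1 : (1 : R) ∈ J := h ▸ Submodule.mem_top
    simpa [J] using h1
  have hfinJ : Finite (R ⧸ J) :=
    Finite.of_injective _
      (LinearMap.ker_eq_bot.1 (Submodule.ker_liftQ_eq_bot' J _ rfl))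
  have hk : Finite (ResidueField R) :=
    Finite.of_surjective _ (Ideal.Quotient.factor_surjective hJ)
  exact not_finite (ResidueField R)

/-- If every associated prime of `E` containing `y` contains `J`, then a power of `J` kills the
`y`-torsion of `E`, because the minimal primes of the annihilator of that torsion submodule are
associated primes of `E` containing `y`. -/
theorem exists_pow_smul_eq_zero {A : Type*} [CommRing A] [IsNoetherianRing A]
    {E : Type*} [AddCommGroup E] [Module A E] [Module.Finite A E] (J : Ideal A) (y : A)
    (h : ∀ p ∈ associatedPrimes A E, y ∈ p → J ≤ p) :
    ∃ c : ℕ, ∀ a ∈ J ^ c, ∀ e : E, y • e = 0 → a • e = 0 := by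
  let K : Submodule A E := Submodule.torsionBy A E y
  have hrad : J ≤ (Module.annihilator A K).radical := by
    rw [← Ideal.sInf_minimalPrimes]
    refine le_sInf fun p hp => ?_
    have hp' := Module.associatedPrimes.minimalPrimes_annihilator_subset_associatedPrimes A K hp
    refine h p (associatedPrimes.subset_of_injective K.injective_subtype hp') (hp.1.2 ?_)
    rw [Module.mem_annihilator]
    rintro ⟨m, hm⟩
    exact Subtype.ext (by simpa [K] using hm)
  obtain ⟨c, hc⟩ := Ideal.exists_pow_le_of_le_radical_of_fg hrad (IsNoetherian.noetherian J)
  refine ⟨c, fun a ha e he => ?_⟩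
  have := Module.mem_annihilator.1 (hc ha) ⟨e, by simpa [K] using he⟩
  exact congrArg Subtype.val this

/-! ### Superficial elements -/

/-- The `I`-filtration `i ↦ I ^ (i + 1) M`; together with the `I`-adic filtration it presents the
associated graded module `⨁ I ^ i M / I ^ (i + 1) M`. -/
def shiftFiltration {R : Type*} [CommRing R] (I : Ideal R)
    (M : Type*) [AddCommGroup M] [Module R M] : I.Filtration M where
  N i := I ^ (i + 1) • ⊤
  mono i := Submodule.smul_mono_left (Ideal.pow_le_pow_right (Nat.le_succ _))
  smul_le i := by rw [← mul_smul, ← pow_succ']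

/-- The `I`-filtration whose `i`-th term consists of the `m ∈ I ^ i M` with `x m ∈ I ^ (i + 2) M`.
For `x ∈ I` this is the preimage of the kernel of the initial form of `x` on the degree `i` part of
the associated graded module. -/
def kerFiltration {R : Type*} [CommRing R] (I : Ideal R)
    (M : Type*) [AddCommGroup M] [Module R M] (x : R) : I.Filtration M where
  N i := I ^ i • ⊤ ⊓ (I ^ (i + 2) • (⊤ : Submodule R M)).comap (LinearMap.lsmul R M x)
  mono i := inf_le_inf (Submodule.smul_mono_left (Ideal.pow_le_pow_right (Nat.le_succ _)))
    (Submodule.comap_mono (Submodule.smul_mono_left (Ideal.pow_le_pow_right (Nat.le_succ _))))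
  smul_le i := by
    refine Submodule.smul_le.2 fun a ha m hm => ⟨?_, ?_⟩
    · have := Submodule.smul_mem_smul ha hm.1
      rwa [← mul_smul, ← pow_succ'] at this
    · have := Submodule.smul_mem_smul ha (Submodule.mem_comap.1 hm.2)
      rw [← mul_smul, ← pow_succ'] at this
      simpa [smul_comm x a m, show i + 1 + 2 = i + 2 + 1 by omega] using this

/-- Existence of superficial elements: some `x ∈ I` acts injectively on the associated graded module
`⨁ I ^ n M / I ^ (n + 1) M` in all large degrees. -/
theorem exists_superficial {R : Type*} [CommRing R] [IsLocalRing R] [IsNoetherianRing R]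
    [Infinite (ResidueField R)] (I : Ideal R)
    (M : Type*) [AddCommGroup M] [Module R M] [Module.Finite R M] :
    ∃ x ∈ I, ∃ n₀ : ℕ, ∀ n ≥ n₀, ∀ m ∈ I ^ n • (⊤ : Submodule R M),
      x • m ∈ I ^ (n + 2) • (⊤ : Submodule R M) → m ∈ I ^ (n + 1) • (⊤ : Submodule R M) := by
  let F := I.stableFiltration (⊤ : Submodule R M)
  let F' := shiftFiltration I M
  have hFG : F.submodule.FG :=
    (F.submodule_fg_iff_stable fun _ => IsNoetherian.noetherian _).2
      (I.stableFiltration_stable ⊤)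
  have hfin : Module.Finite (reesAlgebra I) F.submodule := Module.Finite.iff_fg.2 hFG
  -- The additive group structure has to be named for the quotient `E` to elaborate.
  let instF : AddCommGroup F.submodule := inferInstance
  -- `E` is the associated graded module of `M`, over the Rees algebra.
  let E := F.submodule ⧸ F'.submodule.submoduleOf F.submodule
  let t : I →ₗ[R] reesAlgebra I :=
    { toFun := fun a => ⟨Polynomial.monomial 1 (a : R), reesAlgebra.monomial_mem.2 (by simp)⟩
      map_add' := fun a b => Subtype.ext (by simp)
      map_smul' := fun a b => Subtype.ext (by simp [Polynomial.smul_monomial]) }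
  -- `J` is the irrelevant ideal of the Rees algebra, generated by its degree one part.
  let J : Ideal (reesAlgebra I) := Ideal.span (Set.range t)
  have hJ : ∀ c : ℕ, ∀ b (hb : b ∈ I ^ c),
      (⟨Polynomial.monomial c b, reesAlgebra.monomial_mem.2 hb⟩ : reesAlgebra I) ∈ J ^ c := by
    intro c
    induction c with
    | zero => intro b hb; simp
    | succ c ih =>
      have key : ∀ b ∈ I * I ^ c, ∃ z ∈ J ^ (c + 1), (z : Polynomial R) =
          Polynomial.monomial (c + 1) b := by
        intro b hb
        induction hb using Submodule.mul_induction_on' with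
        | mem_mul_mem a ha b hb =>
          refine ⟨t ⟨a, ha⟩ * ⟨_, reesAlgebra.monomial_mem.2 hb⟩, ?_, ?_⟩
          · rw [pow_succ']
            exact Ideal.mul_mem_mul (Ideal.subset_span ⟨_, rfl⟩) (ih b hb)
          · simp [t, Polynomial.monomial_mul_monomial, add_comm]
        | add a _ b _ ha hb =>
          obtain ⟨u, hu, hu'⟩ := ha
          obtain ⟨v, hv, hv'⟩ := hb
          exact ⟨u + v, add_mem hu hv, by simp [hu', hv']⟩
      intro b hb
      obtain ⟨z, hz, hz'⟩ := key b (by rwa [← pow_succ'])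
      convert hz
      exact hz'.symm
  have hAss := associatedPrimes.finite (reesAlgebra I) E
  -- Choose `x ∈ I` whose degree one form avoids every associated prime of `E` not containing `J`.
  obtain ⟨x, hx⟩ := exists_notMem_of_ne_top (R := R)
    ((fun p : Ideal (reesAlgebra I) => (p.restrictScalars R).comap t) ''
      {p | p ∈ associatedPrimes (reesAlgebra I) E ∧ ¬ J ≤ p})
    ((hAss.subset fun p hp => hp.1).image _) (by
      rintro _ ⟨p, ⟨-, hp⟩, rfl⟩ htop
      refine hp (Ideal.span_le.2 ?_)
      rintro _ ⟨a, rfl⟩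
      have : a ∈ (p.restrictScalars R).comap t := htop.ge Submodule.mem_top
      exact this)
  obtain ⟨c, hc⟩ := exists_pow_smul_eq_zero (E := E) J (t x) (by
    intro p hp hxp
    by_contra hJp
    exact hx _ ⟨p, ⟨hp, hJp⟩, rfl⟩ hxp)
  have hkill : ∀ n, ∀ m ∈ (kerFiltration I M x).N n, ∀ b ∈ I ^ c,
      b • m ∈ I ^ (c + n + 1) • (⊤ : Submodule R M) := by
    intro n m hm b hb
    have hmF : PolynomialModule.single R n m ∈ F.submodule := by
      intro i
      rw [PolynomialModule.coeff_single, Finsupp.single_apply]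
      split_ifs with h
      · exact h ▸ hm.1
      · exact zero_mem _
    have h0 : t x • (Submodule.Quotient.mk ⟨_, hmF⟩ : E) = 0 := by
      rw [← Submodule.Quotient.mk_smul, Submodule.Quotient.mk_eq_zero]
      change Polynomial.monomial 1 (x : R) • PolynomialModule.single R n m ∈ F'.submodule
      rw [PolynomialModule.monomial_smul_single]
      intro i
      rw [PolynomialModule.coeff_single, Finsupp.single_apply]
      split_ifs with h
      · subst h
        have := hm.2
        simp only [F', shiftFiltration]
        rw [show 1 + n + 1 = n + 2 by omega]
        exact this
      · exact zero_mem _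
    have h1 := hc _ (hJ c b hb) _ h0
    rw [← Submodule.Quotient.mk_smul, Submodule.Quotient.mk_eq_zero] at h1
    change Polynomial.monomial c b • PolynomialModule.single R n m ∈ F'.submodule at h1
    rw [PolynomialModule.monomial_smul_single] at h1
    have h2 := h1 (c + n)
    rw [PolynomialModule.coeff_single, Finsupp.single_eq_same] at h2
    exact h2
  -- By Noetherianity of the Rees module the kernels satisfy `K (n₀ + k) = I ^ k K n₀`, so that
  -- the factor `I ^ c` raises the filtration degree.
  have hstab : (kerFiltration I M x).Stable :=
    (I.stableFiltration_stable (⊤ : Submodule R M)).of_le fun i => inf_le_left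
  obtain ⟨n₀, hn₀⟩ := hstab.exists_pow_smul_eq
  have hstep : ∀ n ≥ n₀ + c, (kerFiltration I M x).N n ≤ I ^ (n + 1) • ⊤ := by
    intro n hn
    obtain ⟨k, rfl⟩ := Nat.exists_eq_add_of_le hn
    rw [add_assoc, hn₀, add_comm c k, pow_add, mul_smul]
    have h3 : I ^ c • (kerFiltration I M x).N n₀ ≤ I ^ (c + n₀ + 1) • ⊤ :=
      Submodule.smul_le.2 fun b hb m hm => hkill n₀ m hm b hb
    refine (smul_mono_right _ h3).trans ?_
    rw [← mul_smul, ← pow_add]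
    exact Submodule.smul_mono_left (Ideal.pow_le_pow_right (by omega))
  exact ⟨x, x.2, n₀ + c, fun n hn m hm hxm => hstep n hn ⟨hm, hxm⟩⟩

/-! ### Lengths of quotients -/

theorem mlen_eq (R : Type*) [CommRing R] (M : Type*) [AddCommGroup M] [Module R M] :
    mlen R M = ((Module.length R M : ℕ∞) : WithBot ℕ∞) :=
  (Module.coe_length R M).symm

theorem length_quotient_eq_add {R : Type*} [CommRing R] {M : Type*} [AddCommGroup M] [Module R M]
    {P Q : Submodule R M} (h : Q ≤ P) :
    Module.length R (M ⧸ Q) =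
      Module.length R (P ⧸ Q.comap P.subtype) + Module.length R (M ⧸ P) := by
  refine Module.length_eq_add_of_exact (Submodule.mapQ _ Q P.subtype le_rfl)
    (Submodule.factor h) ?_ (Submodule.factor_surjective h) ?_
  · rw [← LinearMap.ker_eq_bot]
    exact Submodule.ker_liftQ_eq_bot' _ _ (by ext; simp)
  · intro y
    obtain ⟨m, rfl⟩ := Submodule.Quotient.mk_surjective _ y
    constructor
    · intro hm
      have hm' : m ∈ P := by simpa [Submodule.factor] using hm
      exact ⟨Submodule.Quotient.mk ⟨m, hm'⟩, rfl⟩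
    · rintro ⟨z, hz⟩
      obtain ⟨p, rfl⟩ := Submodule.Quotient.mk_surjective _ z
      rw [← hz]
      change (Submodule.Quotient.mk (p : M) : M ⧸ P) = 0
      simp

/-- Both sides are the length of `M ⧸ f(Q)`, filtered by the image `f(M) ⧸ f(Q) ≃ M ⧸ Q`. -/
theorem length_quotient_map {R : Type*} [CommRing R] {M : Type*} [AddCommGroup M] [Module R M]
    (f : M →ₗ[R] M) (hf : Function.Injective f) (Q : Submodule R M) :
    Module.length R (M ⧸ Q.map f) =
      Module.length R (M ⧸ Q) + Module.length R (M ⧸ LinearMap.range f) := by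
  have h : Q.map f ≤ LinearMap.range f := LinearMap.map_le_range
  refine Module.length_eq_add_of_exact (Submodule.mapQ Q (Q.map f) f (Submodule.le_comap_map _ _))
    (Submodule.factor h) ?_ (Submodule.factor_surjective h) ?_
  · rw [← LinearMap.ker_eq_bot]
    refine Submodule.ker_liftQ_eq_bot' _ _ ?_
    rw [LinearMap.ker_comp, Submodule.ker_mkQ, Submodule.comap_map_eq_of_injective hf]
  · intro y
    obtain ⟨m, rfl⟩ := Submodule.Quotient.mk_surjective _ y
    constructor
    · intro hm
      have hm' : m ∈ LinearMap.range f := by simpa [Submodule.factor] using hm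
      obtain ⟨z, rfl⟩ := hm'
      exact ⟨Submodule.Quotient.mk z, rfl⟩
    · rintro ⟨z, hz⟩
      obtain ⟨p, rfl⟩ := Submodule.Quotient.mk_surjective _ z
      rw [← hz]
      change (Submodule.Quotient.mk (f p) : M ⧸ LinearMap.range f) = 0
      simp

theorem eq_of_length_quotient_eq {R : Type*} [CommRing R] {M : Type*} [AddCommGroup M]
    [Module R M] {P Q : Submodule R M} (h : Q ≤ P)
    (hlen : Module.length R (M ⧸ Q) = Module.length R (M ⧸ P))
    (hfin : Module.length R (M ⧸ P) ≠ ⊤) : Q = P := by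
  rw [length_quotient_eq_add h] at hlen
  have h0 : Module.length R (P ⧸ Q.comap P.subtype) = 0 := by
    have : Module.length R (P ⧸ Q.comap P.subtype) + Module.length R (M ⧸ P) =
      0 + Module.length R (M ⧸ P) := by rw [hlen, zero_add]
    exact (ENat.add_left_injective_of_ne_top hfin) this
  rw [Module.length_eq_zero_iff, Submodule.Quotient.subsingleton_iff] at h0
  refine le_antisymm h fun p hp => ?_
  have : (⟨p, hp⟩ : P) ∈ Q.comap P.subtype := h0.ge Submodule.mem_top
  exact this

theorem length_quotient_pow_ne_top {R : Type*} [CommRing R] [IsLocalRing R] [IsNoetherianRing R]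
    {I : Ideal R} (hI : I.radical = maximalIdeal R)
    (M : Type*) [AddCommGroup M] [Module R M] [Module.Finite R M] (n : ℕ) :
    Module.length R (M ⧸ (I ^ n • (⊤ : Submodule R M))) ≠ ⊤ := by
  rcases Nat.eq_zero_or_pos n with rfl | hn
  · have : Subsingleton (M ⧸ (I ^ 0 • (⊤ : Submodule R M))) := by
      rw [Submodule.Quotient.subsingleton_iff]; simp
    simp [Module.length_eq_zero]
  have hrad : (I ^ n).radical = maximalIdeal R := by rw [Ideal.radical_pow _ hn.ne', hI]
  have hmin : maximalIdeal R ∈ (I ^ n).minimalPrimes := by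
    rw [← Ideal.radical_minimalPrimes, hrad, Ideal.minimalPrimes_eq_subsingleton_self]
    rfl
  have := IsLocalRing.quotient_artinian_of_mem_minimalPrimes_of_isLocalRing _ hmin
  have hA : IsArtinian (R ⧸ I ^ n) (M ⧸ (I ^ n • (⊤ : Submodule R M))) := by
    have : Module.Finite (R ⧸ I ^ n) (M ⧸ (I ^ n • (⊤ : Submodule R M))) :=
      Module.Finite.of_restrictScalars_finite R _ _
    infer_instance
  have hA' : IsArtinian R (M ⧸ (I ^ n • (⊤ : Submodule R M))) :=
    isArtinian_of_surjective_algebraMap (R := R ⧸ I ^ n) (S := R)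
      Ideal.Quotient.mk_surjective
  exact Module.length_ne_top

/-! ### Principal reductions -/

/-- A superficial element `x` of `I` is injective on the torsion-free module `M` and, once the lengths
of `I ^ n M / I ^ (n + 1) M` have become constant, satisfies `x I ^ n M = I ^ (n + 1) M`. Injectivity
on `M` follows from Krull's intersection theorem after moving an element killed by `x` into
`I ^ n₀ M` by means of a power of a regular element. -/
theorem exists_reduction {R : Type*} [CommRing R] [IsLocalRing R] [IsNoetherianRing R]
    [Infinite (ResidueField R)]
    (hCM : ∃ r ∈ maximalIdeal R, r ∈ nonZeroDivisors R)
    {I : Ideal R} (hI : I.radical = maximalIdeal R)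
    (M : Type*) [AddCommGroup M] [Module R M] [Module.Finite R M]
    (hTF : TorsionFree R M) {e : ℕ∞}
    (he : ∀ᶠ n in atTop, Module.length R (M ⧸ (I ^ (n + 1) • (⊤ : Submodule R M))) =
      Module.length R (M ⧸ (I ^ n • (⊤ : Submodule R M))) + e) :
    ∃ x ∈ I, Function.Injective (LinearMap.lsmul R M x) ∧
      ∃ n : ℕ, Module.length R (M ⧸ (I ^ (n + 1) • (⊤ : Submodule R M))) =
          Module.length R (M ⧸ (I ^ n • (⊤ : Submodule R M))) + e ∧
        (I ^ n • (⊤ : Submodule R M)).map (LinearMap.lsmul R M x) = I ^ (n + 1) • ⊤ := by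
  have hIne : I ≠ ⊤ := fun h => by
    rw [h, Ideal.radical_top] at hI
    exact (maximalIdeal.isMaximal R).ne_top hI.symm
  obtain ⟨x, hxI, n₀, hx⟩ := exists_superficial I M
  have hinj : Function.Injective (LinearMap.lsmul R M x) := by
    rw [← LinearMap.ker_eq_bot, Submodule.eq_bot_iff]
    intro m hm
    have hxm : x • m = 0 := hm
    obtain ⟨r, hrm, hr⟩ := hCM
    rw [← hI] at hrm
    obtain ⟨k, hk⟩ := hrm
    let s := (r ^ k) ^ n₀
    have hs : s ∈ nonZeroDivisors R := pow_mem (pow_mem hr k) n₀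
    have hmem : ∀ j, s • m ∈ I ^ (n₀ + j) • (⊤ : Submodule R M) := by
      intro j
      induction j with
      | zero => exact Submodule.smul_mem_smul (Ideal.pow_mem_pow hk n₀) Submodule.mem_top
      | succ j ih =>
        refine hx (n₀ + j) (by omega) _ ih ?_
        rw [smul_comm, hxm, smul_zero]
        exact zero_mem _
    refine hTF s hs m ?_
    have hbot : s • m ∈ (⨅ i : ℕ, I ^ i • (⊤ : Submodule R M)) :=
      (Submodule.mem_iInf _).2 fun i =>
        Submodule.smul_mono_left (Ideal.pow_le_pow_right (by omega)) (hmem i)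
    rwa [Ideal.iInf_pow_smul_eq_bot_of_isLocalRing I hIne, Submodule.mem_bot] at hbot
  refine ⟨x, hxI, hinj, ?_⟩
  obtain ⟨n₁, hn₁⟩ := eventually_atTop.1 he
  let n := max n₀ n₁
  refine ⟨n, hn₁ n (le_max_right _ _), ?_⟩
  let N : ℕ → Submodule R M := fun i => I ^ i • ⊤
  have hN : ∀ i, N (i + 1) ≤ N i :=
    fun i => Submodule.smul_mono_left (Ideal.pow_le_pow_right (Nat.le_succ _))
  have hmul : ∀ i, ∀ m ∈ N i, x • m ∈ N (i + 1) := by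
    intro i m hm
    have := Submodule.smul_mem_smul hxI hm
    rwa [← mul_smul, ← pow_succ'] at this
  have hgr : ∀ i ≥ n₁, Module.length R (N i ⧸ (N (i + 1)).comap (N i).subtype) = e := by
    intro i hi
    have h1 := length_quotient_eq_add (hN i)
    have h2 := hn₁ i hi
    exact ENat.add_left_injective_of_ne_top (length_quotient_pow_ne_top hI M i) 
      (h1.symm.trans (h2.trans (add_comm _ _)))
  have hefin : e ≠ ⊤ := by
    intro h
    have := hn₁ n₁ le_rfl
    rw [h, add_top] at this
    exact length_quotient_pow_ne_top hI M _ this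
  let f : N n →ₗ[R] N (n + 1) := (LinearMap.lsmul R M x).restrict (hmul n)
  have hfle : (N (n + 1)).comap (N n).subtype ≤
      ((N (n + 2)).comap (N (n + 1)).subtype).comap f := fun m hm => hmul (n + 1) m hm
  let g := Submodule.mapQ _ _ f hfle
  have hg : Function.Injective g := by
    rw [← LinearMap.ker_eq_bot]
    refine Submodule.ker_liftQ_eq_bot _ _ _ ?_
    rintro ⟨m, hm⟩ hxm
    rw [LinearMap.ker_comp, Submodule.ker_mkQ] at hxm
    exact hx n (le_max_left _ _) m hm hxm
  -- An injective map between modules of the same finite length `e` is surjective.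
  have hgs : LinearMap.range g = ⊤ := by
    have h1 := Module.length_eq_add_of_exact g (LinearMap.range g).mkQ hg
      (Submodule.mkQ_surjective _) (LinearMap.exact_map_mkQ_range g)
    rw [hgr n (le_max_right _ _), hgr (n + 1) (Nat.le_succ_of_le (le_max_right _ _))] at h1
    have h0 : Module.length R (_ ⧸ LinearMap.range g) = 0 := by
      refine ENat.add_right_injective_of_ne_top hefin ?_
      simpa using h1.symm
    rwa [Module.length_eq_zero_iff, Submodule.Quotient.subsingleton_iff] at h0
  apply le_antisymm
  · rintro _ ⟨m, hm, rfl⟩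
    exact hmul n m hm
  · refine Submodule.le_of_le_smul_of_le_jacobson_bot (I := I) (IsNoetherian.noetherian _)
      ((le_maximalIdeal hIne).trans (maximalIdeal_le_jacobson _)) ?_
    intro y hy
    obtain ⟨z, hz⟩ := LinearMap.range_eq_top.1 hgs (Submodule.Quotient.mk ⟨y, hy⟩)
    obtain ⟨m, rfl⟩ := Submodule.Quotient.mk_surjective _ z
    have hz' : f m - ⟨y, hy⟩ ∈ (N (n + 2)).comap (N (n + 1)).subtype :=
      (Submodule.Quotient.eq _).1 hz
    have hz2 : x • (m : M) - y ∈ N (n + 2) := hz'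
    refine Submodule.mem_sup.2 ⟨x • (m : M), ⟨m, m.2, rfl⟩, -(x • (m : M) - y), ?_, by abel⟩
    rw [← mul_smul, ← pow_succ']
    exact neg_mem hz2

/-! ### Ulrich modules -/

/-- if `M` is `I`-Ulrich then `M` has minimal multiplicity with respect to `I`. -/
theorem stmt3 (R : Type*) [CommRing R] [IsLocalRing R] [IsNoetherianRing R]
    [Infinite (ResidueField R)]
    (hdim : ringKrullDim R = 1)
    (hCM : ∃ r ∈ maximalIdeal R, r ∈ nonZeroDivisors R)
    (I : Ideal R) (hI : I.radical = maximalIdeal R)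
    (M : Type*) [AddCommGroup M] [Module R M] [Module.Finite R M] [Nontrivial M]
    (hTF : TorsionFree R M)
    (hUlrich : ((hsMult R I M : ℕ∞) : WithBot ℕ∞) = mlen R (M ⧸ (I • (⊤ : Submodule R M)))) :
    ((hsMult R I M : ℕ∞) : WithBot ℕ∞) =
      qlen R (I • (⊤ : Submodule R M)) (I ^ 2 • (⊤ : Submodule R M)) := by
  have hIne : I ≠ ⊤ := fun h => by
    rw [h, Ideal.radical_top] at hI
    exact (maximalIdeal.isMaximal R).ne_top hI.symm
  have hIM : I • (⊤ : Submodule R M) ≠ ⊤ := fun h => by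
    have := Submodule.eq_bot_of_le_smul_of_le_jacobson_bot I (⊤ : Submodule R M)
      Module.Finite.fg_top h.ge ((le_maximalIdeal hIne).trans (maximalIdeal_le_jacobson _))
    exact top_ne_bot this
  rw [mlen_eq, WithBot.coe_inj] at hUlrich
  rw [qlen, mlen_eq, WithBot.coe_inj]
  have hev : ∀ᶠ n in atTop, Module.length R (M ⧸ (I ^ (n + 1) • (⊤ : Submodule R M))) =
      Module.length R (M ⧸ (I ^ n • (⊤ : Submodule R M))) + hsMult R I M := by
    by_cases h : ∃ e : ℕ∞, ∀ᶠ n in atTop,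
      mlen R (M ⧸ (I ^ (n + 1) • (⊤ : Submodule R M))) =
        mlen R (M ⧸ (I ^ n • (⊤ : Submodule R M))) + (e : WithBot ℕ∞)
    · have hs : hsMult R I M = h.choose := by rw [hsMult, dif_pos h]
      rw [hs]
      filter_upwards [h.choose_spec] with n hn
      rw [mlen_eq, mlen_eq, ← WithBot.coe_add, WithBot.coe_inj] at hn
      exact hn
    -- Without eventual linear growth `hsMult` has the junk value `0`, forcing `M = I M`, which
    -- Nakayama's lemma excludes.
    · have hs : hsMult R I M = 0 := by rw [hsMult, dif_neg h]
      rw [hs, eq_comm, Module.length_eq_zero_iff, Submodule.Quotient.subsingleton_iff] at hUlrich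
      exact absurd hUlrich hIM
  obtain ⟨x, hxI, hinj, n, hn, hred⟩ := exists_reduction hCM hI M hTF hev
  have hfin := length_quotient_pow_ne_top hI M
  have hfin1 : Module.length R (M ⧸ (I • (⊤ : Submodule R M))) ≠ ⊤ := by
    have h1 := hfin 1
    rwa [pow_one] at h1
  have hlx : Module.length R (M ⧸ LinearMap.range (LinearMap.lsmul R M x)) = hsMult R I M := by
    have h1 := length_quotient_map _ hinj (I ^ n • (⊤ : Submodule R M))
    rw [hred, hn] at h1
    exact ENat.add_right_injective_of_ne_top (hfin n) h1.symm
  -- `M ⧸ xM` surjects onto `M ⧸ IM`, and both have length `e(I, M)`.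
  have hxM : LinearMap.range (LinearMap.lsmul R M x) = I • (⊤ : Submodule R M) := by
    refine eq_of_length_quotient_eq ?_ (hlx.trans hUlrich) hfin1
    rintro _ ⟨m, rfl⟩
    exact Submodule.smul_mem_smul hxI Submodule.mem_top
  have hxIM : (I • (⊤ : Submodule R M)).map (LinearMap.lsmul R M x) = I ^ 2 • ⊤ := by
    rw [Submodule.map_smul'', Submodule.map_top, hxM, ← mul_smul, ← pow_two]
  have h2 := length_quotient_map _ hinj (I • (⊤ : Submodule R M))
  rw [hxIM, hlx, add_comm] at h2
  have h3 := length_quotient_eq_add (R := R) (M := M) (P := I • ⊤) (Q := I ^ 2 • ⊤)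
    (by rw [pow_two, mul_smul]; exact Submodule.smul_le_right)
  exact ENat.add_left_injective_of_ne_top hfin1 (h2.symm.trans h3)
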